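/- Let F be a field, ≺ a monomial ordering on the monomials of F[x_1,…,x_n], and f ∈ F[x_1,…,x_n] a nonzero polynomial. Let x^i be the ≺-largest monomial appearing with a nonzero coefficient in f. Then 2^{|supp(i)|} ≤ |∂(f)|, where supp(i) := {ℓ ∈ {1,…,n} : i_ℓ ≠ 0}; equivalently, the number of variables appearing in the leading monomial of f is at most log₂ |∂(f)|. -/

import Mathlib

/-- The `k`-th Hasse derivative of `f` in direction `u`: the coefficient of `y^k` in
`f(x_1 + u_1 y, …, x_m + u_m y)`. -/
noncomputable def hasseDeriv {R : Type*} [CommRing R] {m : ℕ} (u : Fin m → R) (k : ℕ)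
    (f : MvPolynomial (Fin m) R) : MvPolynomial (Fin m) R :=
  ((MvPolynomial.aeval fun i : Fin m =>
      Polynomial.C (MvPolynomial.X i) + Polynomial.C (MvPolynomial.C (u i)) * Polynomial.X)
    f).coeff k

/-- `∂_{x_j^k}`, the `k`-th Hasse derivative with respect to the variable `x_j`. -/
noncomputable def hasseDerivAt {R : Type*} [CommRing R] {m : ℕ} (j : Fin m) (k : ℕ) :
    MvPolynomial (Fin m) R → MvPolynomial (Fin m) R :=
  hasseDeriv (Pi.single j (1 : R)) k

/-- `∂_{x^i} := ∂_{x_1^{i_1}} ∘ ⋯ ∘ ∂_{x_m^{i_m}}` for a multi-index `i`. -/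
noncomputable def multiHasseDeriv {R : Type*} [CommRing R] {m : ℕ} (i : Fin m → ℕ)
    (f : MvPolynomial (Fin m) R) : MvPolynomial (Fin m) R :=
  List.foldr (fun j g => hasseDerivAt j (i j) g) f (List.finRange m)

/-- `|∂(f)|`, the dimension of the span of all iterated Hasse derivatives
`∂_{x^i}(f)`, `i ∈ ℕ^m`. -/
noncomputable def hasseDim {F : Type*} [Field F] {m : ℕ} (f : MvPolynomial (Fin m) F) : ℕ :=
  Module.finrank F
    (Submodule.span F (Set.range fun i : Fin m → ℕ => multiHasseDeriv i f))

/-!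
Fix a multi-index `a` all of whose binomials `(i_j choose a_j)` are nonzero in `F`. The
coefficient of `x^(i-a)` in `∂_{x^a}(f)` is the product of these binomials times the leading
coefficient of `f`, so `∂_{x^a}(f)` has leading monomial `x^(i-a)`. These leading monomials are
distinct, hence such derivatives are linearly independent. Each coordinate with `i_j ≠ 0` allows at
least the two choices `a_j = 0` and `a_j = i_j`, whatever the characteristic.
-/

/-- A translation-invariant strict order that is not total need not reflect translations; the
relation below repairs this. -/
theorem isStrictOrder_exists_add_right {M : Type*} [AddCommSemigroup M] (lt : M → M → Prop)
    [IsStrictOrder M lt] (h_add : ∀ a b c, lt a b → lt (a + c) (b + c)) :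
    IsStrictOrder M fun a b => ∃ c, lt (a + c) (b + c) where
  irrefl := fun _ ⟨_, h⟩ => irrefl_of lt _ h
  trans := by
    rintro a b d ⟨c, hab⟩ ⟨e, hbd⟩
    refine ⟨c + e, trans_of lt (b := b + (c + e)) ?_ ?_⟩
    · simpa only [add_assoc] using h_add _ _ e hab
    · simpa only [add_assoc, add_comm c e] using h_add _ _ c hbd

theorem linearIndepOn_of_triangular {ι R M : Type*} [Ring R] [NoZeroDivisors R] [AddCommGroup M]
    [Module R M] (r : ι → ι → Prop) [IsStrictOrder ι r] {s : Set ι} {v : ι → M}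
    (φ : ι → M →ₗ[R] R) (h_diag : ∀ i ∈ s, φ i (v i) ≠ 0)
    (h_tri : ∀ i ∈ s, ∀ j ∈ s, i ≠ j → φ j (v i) ≠ 0 → r i j) : LinearIndepOn R v s := by
  rw [linearIndepOn_iff'']
  intro t g hts hg_out hg_sum
  by_contra! h_ne
  obtain ⟨i₀, -, hi₀⟩ := h_ne
  have h_mem : ∀ {i}, g i ≠ 0 → i ∈ t := fun h => by_contra fun hi => h (hg_out _ hi)
  have h_fin : {i | g i ≠ 0}.Finite := t.finite_toSet.subset fun _ => h_mem
  obtain ⟨⟨j, hj⟩, -, hj_min⟩ :=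
    (h_fin.wellFoundedOn (r := r)).has_min Set.univ ⟨⟨i₀, hi₀⟩, trivial⟩
  have h_apply : ∑ i ∈ t, g i * φ j (v i) = 0 := by
    simpa only [map_sum, map_smul, smul_eq_mul, map_zero] using congrArg (φ j) hg_sum
  have h_off : ∀ i ∈ t, i ≠ j → g i * φ j (v i) = 0 := by
    intro i hi hij
    by_contra h
    exact hj_min ⟨i, left_ne_zero_of_mul h⟩ trivial
      (h_tri i (hts hi) j (hts (h_mem hj)) hij (right_ne_zero_of_mul h))
  rw [Finset.sum_eq_single_of_mem j (h_mem hj) h_off] at h_apply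
  exact mul_ne_zero hj (h_diag j (hts (h_mem hj))) h_apply

theorem le_of_cast_choose_ne_zero {R : Type*} [AddMonoidWithOne R] {n k : ℕ}
    (h : (n.choose k : R) ≠ 0) : k ≤ n := by
  contrapose! h
  rw [Nat.choose_eq_zero_of_lt h, Nat.cast_zero]

theorem finite_setOf_cast_choose_ne_zero (R : Type*) [AddMonoidWithOne R] (n : ℕ) :
    {k : ℕ | (n.choose k : R) ≠ 0}.Finite :=
  (Set.finite_Iic n).subset fun _ => le_of_cast_choose_ne_zero

theorem two_pow_ncard_support_le_prod_ncard_choose_ne_zero (R : Type*) [AddMonoidWithOne R]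
    [NeZero (1 : R)] {ι : Type*} [Fintype ι] (i : ι → ℕ) :
    2 ^ {l | i l ≠ 0}.ncard ≤ ∏ l, {k : ℕ | ((i l).choose k : R) ≠ 0}.ncard := by
  classical
  have h_zero (n : ℕ) : 0 ∈ {k : ℕ | (n.choose k : R) ≠ 0} := by simp
  have h_self (n : ℕ) : n ∈ {k : ℕ | (n.choose k : R) ≠ 0} := by simp
  calc 2 ^ {l | i l ≠ 0}.ncard = ∏ l, if i l ≠ 0 then 2 else 1 := by
        rw [← Finset.prod_filter, Finset.prod_const, ← Set.ncard_coe_finset, Finset.coe_filter_univ]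
    _ ≤ ∏ l, {k : ℕ | ((i l).choose k : R) ≠ 0}.ncard := by
        refine Finset.prod_le_prod' fun l _ => ?_
        have h_fin := finite_setOf_cast_choose_ne_zero R (i l)
        split_ifs with hl
        · exact (Set.one_lt_ncard h_fin).2 ⟨0, h_zero _, i l, h_self _, hl.symm⟩
        · exact (Set.ncard_pos h_fin).2 ⟨0, h_zero _⟩

section HasseDeriv

open MvPolynomial

variable {R : Type*} [CommRing R] {m : ℕ}

theorem hasseDerivAt_add (j : Fin m) (k : ℕ) (f g : MvPolynomial (Fin m) R) :
    hasseDerivAt j k (f + g) = hasseDerivAt j k f + hasseDerivAt j k g := by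
  simp only [hasseDerivAt, hasseDeriv, map_add, Polynomial.coeff_add]

theorem hasseDerivAt_mul_of_notMem_vars {j : Fin m} (k : ℕ) {f : MvPolynomial (Fin m) R}
    (hj : j ∉ f.vars) (g : MvPolynomial (Fin m) R) :
    hasseDerivAt j k (f * g) = f * hasseDerivAt j k g := by
  have h_const : aeval (fun l => Polynomial.C (X l) +
      Polynomial.C (C (Pi.single j (1 : R) l)) * Polynomial.X) f = Polynomial.C f := by
    refine hom_congr_vars (f₁ := (aeval _).toRingHom) (f₂ := Polynomial.C) ?_ (fun l hl _ => ?_) rfl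
    · ext1 c
      simp [Polynomial.algebraMap_apply, algebraMap_eq]
    · simp [Pi.single_eq_of_ne (ne_of_mem_of_not_mem hl hj)]
  simp only [hasseDerivAt, hasseDeriv, map_mul, h_const, Polynomial.coeff_C_mul]

theorem hasseDerivAt_X_pow (j : Fin m) (k d : ℕ) :
    hasseDerivAt j k (X j ^ d) = (d.choose k : MvPolynomial (Fin m) R) * X j ^ (d - k) := by
  simp only [hasseDerivAt, hasseDeriv, map_pow, aeval_X, Pi.single_eq_same, map_one, one_mul]
  rw [add_comm, Polynomial.coeff_X_add_C_pow, mul_comm]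

theorem hasseDerivAt_monomial (j : Fin m) (k : ℕ) (s : Fin m →₀ ℕ) (c : R) :
    hasseDerivAt j k (monomial s c) =
      monomial (s - Finsupp.single j k) (((s j).choose k : R) * c) := by
  have h_split : monomial s c = monomial (s.erase j) c * X j ^ s j := by
    rw [X_pow_eq_monomial, monomial_mul, mul_one, Finsupp.erase_add_single]
  have h_vars : j ∉ (monomial (s.erase j) c).vars := fun h => by
    obtain ⟨t, ht, hjt⟩ := (mem_vars_iff_mem_support j).1 h
    rw [Finset.mem_singleton.1 (support_monomial_subset ht)] at hjt
    simp at hjt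
  have h_exp : s - Finsupp.single j k = s.erase j + Finsupp.single j (s j - k) := by
    ext l
    by_cases hl : l = j
    · subst hl
      simp
    · simp [hl]
  rw [h_split, hasseDerivAt_mul_of_notMem_vars k h_vars, hasseDerivAt_X_pow, X_pow_eq_monomial,
    ← map_natCast C, C_mul_monomial, monomial_mul, h_exp, mul_one, mul_comm c]

theorem coeff_hasseDerivAt (j : Fin m) (k : ℕ) (f : MvPolynomial (Fin m) R) (b : Fin m →₀ ℕ) :
    coeff b (hasseDerivAt j k f) =
      ((b j + k).choose k : R) * coeff (b + Finsupp.single j k) f := by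
  classical
  induction f using MvPolynomial.induction_on' with
  | add p q hp hq => rw [hasseDerivAt_add, coeff_add, hp, hq, coeff_add, mul_add]
  | monomial s c =>
    rw [hasseDerivAt_monomial, coeff_monomial, coeff_monomial]
    rcases lt_or_ge (s j) k with hk | hk
    · have h_ne : s ≠ b + Finsupp.single j k := by
        rintro rfl
        simp at hk
      simp [h_ne, Nat.choose_eq_zero_of_lt hk]
    · have h_le : Finsupp.single j k ≤ s := Finsupp.single_le_iff.2 hk
      have h_iff : s - Finsupp.single j k = b ↔ s = b + Finsupp.single j k :=
        tsub_eq_iff_eq_add_of_le h_le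
      simp only [h_iff]
      split_ifs with h
      · simp [h]
      · rw [mul_zero]

theorem coeff_foldr_hasseDerivAt (a : Fin m → ℕ) (f : MvPolynomial (Fin m) R) {l : List (Fin m)}
    (hl : l.Nodup) (b : Fin m →₀ ℕ) :
    coeff b (l.foldr (fun j g => hasseDerivAt j (a j) g) f) =
      (l.map fun j => ((b j + a j).choose (a j) : R)).prod *
        coeff (b + (l.map fun j => Finsupp.single j (a j)).sum) f := by
  induction l generalizing b with
  | nil => simp
  | cons j l ih =>
    obtain ⟨hj, hl⟩ := List.nodup_cons.1 hl
    have h_map : (l.map fun p => (((b + Finsupp.single j (a j)) p + a p).choose (a p) : R)) =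
        l.map fun p => ((b p + a p).choose (a p) : R) :=
      List.map_congr_left fun p hp => by simp [ne_of_mem_of_not_mem hp hj]
    rw [List.foldr_cons, coeff_hasseDerivAt, ih hl, h_map, List.map_cons, List.prod_cons,
      List.map_cons, List.sum_cons, mul_assoc, add_assoc]

theorem coeff_multiHasseDeriv (a b : Fin m → ℕ) (f : MvPolynomial (Fin m) R) :
    coeff (Finsupp.equivFunOnFinite.symm b) (multiHasseDeriv a f) =
      (∏ j, ((b j + a j).choose (a j) : R)) *
        coeff (Finsupp.equivFunOnFinite.symm (b + a)) f := by
  have h_sum : Finsupp.equivFunOnFinite.symm b + ∑ j, Finsupp.single j (a j) =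
      Finsupp.equivFunOnFinite.symm (b + a) := by
    ext p
    simp [Finsupp.single_apply]
  rw [multiHasseDeriv, coeff_foldr_hasseDerivAt a f (List.nodup_finRange m), ← List.ofFn_eq_map,
    ← List.ofFn_eq_map, List.prod_ofFn, List.sum_ofFn, h_sum]
  rfl

theorem finite_support_multiHasseDeriv (f : MvPolynomial (Fin m) R) :
    (Function.support fun a : Fin m → ℕ => multiHasseDeriv a f).Finite := by
  refine (f.support.finite_toSet.biUnion fun s _ => Set.finite_Iic (s : Fin m → ℕ)).subset ?_
  intro a ha
  obtain ⟨b, hb⟩ := ne_zero_iff.1 ha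
  rw [← Finsupp.equivFunOnFinite.symm_apply_apply b, coeff_multiHasseDeriv] at hb
  exact Set.mem_biUnion (mem_support_iff.2 (right_ne_zero_of_mul hb)) (le_add_self (a := a))

theorem finite_range_multiHasseDeriv (f : MvPolynomial (Fin m) R) :
    (Set.range fun a : Fin m → ℕ => multiHasseDeriv a f).Finite :=
  (((finite_support_multiHasseDeriv f).image _).insert 0).subset
    (Function.range_subset_insert_image_support _)

theorem linearIndepOn_multiHasseDeriv [IsDomain R] (lt : (Fin m → ℕ) → (Fin m → ℕ) → Prop)
    [IsStrictOrder (Fin m → ℕ) lt] (h_add : ∀ a b c, lt a b → lt (a + c) (b + c))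
    {f : MvPolynomial (Fin m) R} {i : Fin m → ℕ}
    (hi : coeff (Finsupp.equivFunOnFinite.symm i) f ≠ 0)
    (hmax : ∀ j, coeff (Finsupp.equivFunOnFinite.symm j) f ≠ 0 → j ≠ i → lt j i) :
    LinearIndepOn R (fun a => multiHasseDeriv a f)
      (Set.univ.pi fun j => {k | ((i j).choose k : R) ≠ 0}) := by
  have := isStrictOrder_exists_add_right lt h_add
  have h_sub : ∀ a ∈ Set.univ.pi fun j => {k | ((i j).choose k : R) ≠ 0}, i - a + a = i :=
    fun a ha => tsub_add_cancel_of_le fun j => le_of_cast_choose_ne_zero (ha j trivial)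
  refine linearIndepOn_of_triangular (fun a b => ∃ c, lt (a + c) (b + c))
    (fun b => lcoeff R (Finsupp.equivFunOnFinite.symm (i - b))) (fun a ha => ?_)
    fun a _ b hb hab h_ne => ⟨i - b, ?_⟩
  · rw [lcoeff_apply, coeff_multiHasseDeriv, h_sub a ha]
    refine mul_ne_zero (Finset.prod_ne_zero_iff.2 fun j _ => ?_) hi
    rw [← Pi.add_apply, h_sub a ha]
    exact ha j trivial
  · rw [lcoeff_apply, coeff_multiHasseDeriv] at h_ne
    have h_lt := hmax (i - b + a) (right_ne_zero_of_mul h_ne) fun h =>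
      hab (add_left_cancel (h.trans (h_sub b hb).symm))
    rwa [add_comm a, add_comm b, h_sub b hb]

theorem ncard_le_hasseDim {F : Type*} [Field F] {m : ℕ} {f : MvPolynomial (Fin m) F}
    {s : Set (Fin m → ℕ)} (hs : LinearIndepOn F (fun a => multiHasseDeriv a f) s) :
    s.ncard ≤ hasseDim f := by
  have := Module.Finite.span_of_finite F (finite_range_multiHasseDeriv f)
  calc s.ncard = Module.finrank F (Submodule.span F (Set.range fun a : s => multiHasseDeriv a f)) :=
        (Module.finrank_eq_nat_card_basis (Module.Basis.span hs)).symm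
    _ ≤ hasseDim f := Submodule.finrank_mono <| Submodule.span_mono <|
        Set.range_comp_subset_range Subtype.val fun a => multiHasseDeriv a f

/-- In characteristic zero the left-hand side is `∏ l, (i l + 1)`. -/
theorem two_pow_support_leading_le_hasseDim_general {F : Type*} [Field F] {n : ℕ}
    (lt : (Fin n → ℕ) → (Fin n → ℕ) → Prop) [IsStrictOrder (Fin n → ℕ) lt]
    (h_add : ∀ a b c, lt a b → lt (a + c) (b + c))
    (f : MvPolynomial (Fin n) F) (i : Fin n → ℕ)
    (hi : coeff (Finsupp.equivFunOnFinite.symm i) f ≠ 0)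
    (hmax : ∀ j, coeff (Finsupp.equivFunOnFinite.symm j) f ≠ 0 → j ≠ i → lt j i) :
    ∏ l, {k : ℕ | ((i l).choose k : F) ≠ 0}.ncard ≤ hasseDim f := by
  calc ∏ l, {k : ℕ | ((i l).choose k : F) ≠ 0}.ncard
      = (Set.univ.pi fun l => {k : ℕ | ((i l).choose k : F) ≠ 0}).ncard :=
        ((Nat.card_congr (Equiv.Set.univPi _)).trans Nat.card_pi).symm
    _ ≤ hasseDim f := ncard_le_hasseDim (linearIndepOn_multiHasseDeriv lt h_add hi hmax)

end HasseDeriv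

/-- Let `≺` be a monomial ordering and `f ≠ 0` with ≺-largest monomial
`x^i` (every other monomial of `f` is ≺-smaller).  Then `2^{|supp(i)|} ≤ |∂(f)|`, where
`supp(i)` is the set of variables appearing in `x^i`. -/
theorem two_pow_support_leading_le_hasseDim {F : Type*} [Field F] {n : ℕ}
    (lt : (Fin n → ℕ) → (Fin n → ℕ) → Prop)
    (h_total : ∀ a b, a ≠ b → lt a b ∨ lt b a)
    (h_irrefl : ∀ a, ¬ lt a a)
    (h_trans : ∀ a b c, lt a b → lt b c → lt a c)
    (h_one : ∀ a, a ≠ 0 → lt 0 a)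
    (h_mul : ∀ a b c, lt a b → lt (a + c) (b + c))
    (f : MvPolynomial (Fin n) F) (hf : f ≠ 0) (i : Fin n → ℕ)
    (hi : MvPolynomial.coeff (Finsupp.equivFunOnFinite.symm i) f ≠ 0)
    (hmax : ∀ j : Fin n → ℕ,
      MvPolynomial.coeff (Finsupp.equivFunOnFinite.symm j) f ≠ 0 → j ≠ i → lt j i) :
    2 ^ Set.ncard {ℓ : Fin n | i ℓ ≠ 0} ≤ hasseDim f := by
  have : IsStrictOrder (Fin n → ℕ) lt := { irrefl := h_irrefl, trans := h_trans }
  exact (two_pow_ncard_support_le_prod_ncard_choose_ne_zero F i).trans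
    (two_pow_support_leading_le_hasseDim_general lt h_mul f i hi hmax)
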